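/- arXiv:2012.08873 — 4 statements merged into one kernel-verified Lean document; each statement's English description precedes it below -/
import Mathlib

section
/- Fix polynomials g_1,…,g_m and h_1,…,h_l in ℝ[x] and an integer k ≥ max{⌈g_i⌉, ⌈h_j⌉}. Suppose a_k > 0 admits a representation a_k = v_k^T G_0 v_k + Σ_{i=1}^m g_i · v_{k-⌈g_i⌉}^T G_i v_{k-⌈g_i⌉} + Σ_{j=1}^l h_j ψ_j in ℝ[x], where each G_i is a symmetric positive definite matrix (G_0 indexed by ℕ^n_k, G_i indexed by ℕ^n_{k-⌈g_i⌉}) and each ψ_j is a polynomial of degree at most 2(k−⌈h_j⌉). Then every real sequence y = (y_α)_{α∈ℕ^n_{2k}} with y_0 = 1 and M_{k-⌈h_j⌉}(h_j·y) = 0 for all j ∈ {1,…,l} satisfies trace(M_k(y)·G_0) + Σ_{i=1}^m trace(M_{k-⌈g_i⌉}(g_i·y)·G_i) = a_k; equivalently, trace(P_k D_k(y) P_k) = a_k where D_k(y) := diag(M_k(y), M_{k-⌈g_1⌉}(g_1·y),…, M_{k-⌈g_m⌉}(g_m·y)) and P_k := diag(G_0^{1/2},…,G_m^{1/2}). -/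
open MvPolynomial

/-- `⌈p⌉ := ⌈deg(p)/2⌉`. -/
noncomputable def halfCeil {n : ℕ} (p : MvPolynomial (Fin n) ℝ) : ℕ :=
  (p.totalDegree + 1) / 2

/-- The finite set `ℕ^n_d` of multi-indices `α ∈ ℕ^n` with `|α| ≤ d`. -/
noncomputable def degLE (n d : ℕ) : Finset (Fin n →₀ ℕ) :=
  (Finset.Iic (Finsupp.equivFunOnFinite.symm fun _ : Fin n => d)).filter
    fun α => (∑ i, α i) ≤ d

/-- The polynomial `v_d^T G v_d = Σ_{α,β ∈ ℕ^n_d} G_{α,β} x^{α+β}` associated with a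
matrix `G` indexed by `ℕ^n_d`. -/
noncomputable def quadForm (n d : ℕ)
    (G : Matrix ↥(degLE n d) ↥(degLE n d) ℝ) : MvPolynomial (Fin n) ℝ :=
  ∑ α : ↥(degLE n d), ∑ β : ↥(degLE n d), monomial (α.1 + β.1) (G α β)

/-- The moment matrix `M_d(y)`, with entries `(M_d(y))_{α,β} = y_{α+β}`. -/
noncomputable def momentMat (n d : ℕ) (y : (Fin n →₀ ℕ) → ℝ) :
    Matrix ↥(degLE n d) ↥(degLE n d) ℝ :=
  Matrix.of fun α β => y (α.1 + β.1)

/-- The localizing matrix `M_d(q·y)`, with entries `Σ_γ q_γ y_{α+β+γ}`. -/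
noncomputable def locMat (n d : ℕ) (q : MvPolynomial (Fin n) ℝ)
    (y : (Fin n →₀ ℕ) → ℝ) : Matrix ↥(degLE n d) ↥(degLE n d) ℝ :=
  Matrix.of fun α β => ∑ γ ∈ q.support, coeff γ q * y (α.1 + β.1 + γ)

/-!
The Riesz functional `L_y` of a sequence `y` is the linear functional on `ℝ[x]` sending `x^α` to
`y_α`. The entry `(M_d(q·y))_{α,β}` is `L_y(q x^{α+β})`, so linearity gives
`L_y(q · v_d^T G v_d) = trace(M_d(q·y) G)`. Every monomial of degree at most `2d` is of the form
`x^{α+β}` with `|α|, |β| ≤ d`, so `M_d(q·y) = 0` forces `L_y` to vanish on `q ψ` whenever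
`deg ψ ≤ 2d`. Applying `L_y` to the representation of the constant `a` yields the trace identity.
-/

section Riesz

variable {σ R : Type*} [CommSemiring R]

/-- The Riesz functional of a sequence `y` indexed by exponents: the linear functional on
polynomials which sends each monomial `x^α` to `y_α`. It turns polynomial identities into
identities between moments. -/
noncomputable def riesz (y : (σ →₀ ℕ) → R) : MvPolynomial σ R →ₗ[R] R :=
  (basisMonomials σ R).constr R y

lemma riesz_monomial (y : (σ →₀ ℕ) → R) (s : σ →₀ ℕ) (c : R) :
    riesz y (monomial s c) = c * y s := by
  have riesz_monomial_one : riesz y (monomial s 1) = y s := by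
    simpa only [riesz, coe_basisMonomials] using (basisMonomials σ R).constr_basis R y s
  calc riesz y (monomial s c) = riesz y (c • monomial s 1) := by
        rw [smul_monomial, smul_eq_mul, mul_one]
    _ = c * y s := by rw [map_smul, riesz_monomial_one, smul_eq_mul]

lemma riesz_C (y : (σ →₀ ℕ) → R) (c : R) : riesz y (C c) = c * y 0 :=
  riesz_monomial y 0 c

lemma riesz_mul_monomial (y : (σ →₀ ℕ) → R) (q : MvPolynomial σ R) (s : σ →₀ ℕ) (c : R) :
    riesz y (q * monomial s c) = c * ∑ γ ∈ q.support, coeff γ q * y (s + γ) := by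
  conv_lhs => rw [q.as_sum, Finset.sum_mul, map_sum]
  rw [Finset.mul_sum]
  refine Finset.sum_congr rfl fun γ _ => ?_
  rw [monomial_mul, riesz_monomial, add_comm γ s]
  ring

end Riesz

section MultiIndices

open scoped Pointwise

variable {n d e : ℕ}

lemma mem_degLE {α : Fin n →₀ ℕ} : α ∈ degLE n d ↔ α.degree ≤ d := by
  rw [degLE, Finset.mem_filter, Finset.mem_Iic, ← Finsupp.degree_eq_sum]
  exact and_iff_right_of_imp fun hα i => (Finsupp.le_degree i α).trans hα

lemma degLE_add : degLE n (d + e) = degLE n d + degLE n e := by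
  ext s
  simp only [Finset.mem_add, mem_degLE]
  constructor
  · intro hs
    obtain ⟨α, hαs, hα⟩ := s.exists_le_degree_eq (min d s.degree) (min_le_right _ _)
    obtain ⟨β, rfl⟩ := exists_add_of_le hαs
    rw [map_add] at hs hα
    exact ⟨α, by omega, β, by omega, rfl⟩
  · rintro ⟨α, hα, β, hβ, rfl⟩
    rw [map_add]
    exact add_le_add hα hβ

lemma mem_degLE_of_mem_support {p : MvPolynomial (Fin n) ℝ} (hp : p.totalDegree ≤ d)
    {s : Fin n →₀ ℕ} (hs : s ∈ p.support) : s ∈ degLE n d :=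
  mem_degLE.mpr ((le_totalDegree hs).trans hp)

end MultiIndices

section LocalizingMatrices

open scoped Matrix Pointwise

variable {n d : ℕ} (y : (Fin n →₀ ℕ) → ℝ) (q : MvPolynomial (Fin n) ℝ)

lemma isSymm_locMat : (locMat n d q y).IsSymm := by
  ext α β
  simp only [Matrix.transpose_apply, locMat, Matrix.of_apply, add_comm β.1 α.1]

lemma riesz_mul_monomial_add (α β : degLE n d) (c : ℝ) :
    riesz y (q * monomial (α.1 + β.1) c) = locMat n d q y α β * c := by
  rw [riesz_mul_monomial, locMat, Matrix.of_apply, mul_comm]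

lemma locMat_one : locMat n d 1 y = momentMat n d y := by
  ext α β
  calc locMat n d 1 y α β = riesz y (1 * monomial (α.1 + β.1) 1) := by
        rw [riesz_mul_monomial_add, mul_one]
    _ = y (α.1 + β.1) := by rw [one_mul, riesz_monomial, one_mul]

lemma riesz_mul_quadForm (G : Matrix (degLE n d) (degLE n d) ℝ) :
    riesz y (q * quadForm n d G) = (locMat n d q y * G).trace := by
  calc riesz y (q * quadForm n d G)
      = ∑ α, ∑ β, locMat n d q y α β * G α β := by
        simp only [quadForm, Finset.mul_sum, map_sum, riesz_mul_monomial_add]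
    _ = ((locMat n d q y)ᵀ * G).trace := by
        rw [Finset.sum_comm]
        rfl
    _ = (locMat n d q y * G).trace := by rw [(isSymm_locMat y q).eq]

lemma riesz_quadForm (G : Matrix (degLE n d) (degLE n d) ℝ) :
    riesz y (quadForm n d G) = (momentMat n d y * G).trace := by
  rw [← locMat_one, ← riesz_mul_quadForm, one_mul]

variable {y q}

lemma riesz_mul_eq_zero_of_locMat_eq_zero (hq : locMat n d q y = 0)
    {p : MvPolynomial (Fin n) ℝ} (hp : p.totalDegree ≤ 2 * d) : riesz y (q * p) = 0 := by
  rw [p.as_sum, Finset.mul_sum, map_sum]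
  refine Finset.sum_eq_zero fun s hs => ?_
  have hs_sum : s ∈ degLE n d + degLE n d := by
    rw [← degLE_add, ← two_mul]
    exact mem_degLE_of_mem_support hp hs
  obtain ⟨α, hα, β, hβ, rfl⟩ := Finset.mem_add.mp hs_sum
  rw [riesz_mul_monomial_add y q ⟨α, hα⟩ ⟨β, hβ⟩, hq, Matrix.zero_apply, zero_mul]

end LocalizingMatrices

theorem stmt1_general {n : ℕ} {ι κ : Type*} [Fintype ι] [Fintype κ]
    (g : ι → MvPolynomial (Fin n) ℝ) (h : κ → MvPolynomial (Fin n) ℝ)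
    (k : ℕ) (d : ι → ℕ) (e : κ → ℕ) (a : ℝ)
    (G0 : Matrix (degLE n k) (degLE n k) ℝ)
    (G : ∀ i, Matrix (degLE n (d i)) (degLE n (d i)) ℝ)
    (ψ : κ → MvPolynomial (Fin n) ℝ) (hψ : ∀ j, (ψ j).totalDegree ≤ 2 * e j)
    (hrep : C a = quadForm n k G0 + (∑ i, g i * quadForm n (d i) (G i)) + ∑ j, h j * ψ j)
    (y : (Fin n →₀ ℕ) → ℝ) (hy : ∀ j, locMat n (e j) (h j) y = 0) :
    (momentMat n k y * G0).trace + (∑ i, (locMat n (d i) (g i) y * G i).trace) = a * y 0 := by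
  have riesz_ideal_part : riesz y (∑ j, h j * ψ j) = 0 := by
    rw [map_sum]
    exact Finset.sum_eq_zero fun j _ => riesz_mul_eq_zero_of_locMat_eq_zero (hy j) (hψ j)
  calc (momentMat n k y * G0).trace + ∑ i, (locMat n (d i) (g i) y * G i).trace
      = riesz y (quadForm n k G0 + ∑ i, g i * quadForm n (d i) (G i)) := by
        simp only [map_add, map_sum, riesz_quadForm, riesz_mul_quadForm]
    _ = riesz y (C a) := by rw [hrep, map_add _ _ (∑ j, h j * ψ j), riesz_ideal_part, add_zero]
    _ = a * y 0 := riesz_C y a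

/-- If `a_k > 0` has a representation
`a_k = v_k^T G_0 v_k + Σ_i g_i · v_{k-⌈g_i⌉}^T G_i v_{k-⌈g_i⌉} + Σ_j h_j ψ_j`
with each `G_i` symmetric positive definite and `deg ψ_j ≤ 2(k−⌈h_j⌉)`, then every sequence
`y` with `y_0 = 1` and vanishing localizing matrices of the `h_j` satisfies
`trace(M_k(y)·G_0) + Σ_i trace(M_{k-⌈g_i⌉}(g_i·y)·G_i) = a_k`. -/
theorem stmt1 (n m l : ℕ)
    (g : Fin m → MvPolynomial (Fin n) ℝ) (h : Fin l → MvPolynomial (Fin n) ℝ)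
    (k : ℕ) (hkg : ∀ i, halfCeil (g i) ≤ k) (hkh : ∀ j, halfCeil (h j) ≤ k)
    (a : ℝ) (ha : 0 < a)
    (G0 : Matrix ↥(degLE n k) ↥(degLE n k) ℝ) (hG0 : G0.PosDef)
    (G : ∀ i : Fin m,
      Matrix ↥(degLE n (k - halfCeil (g i))) ↥(degLE n (k - halfCeil (g i))) ℝ)
    (hG : ∀ i, (G i).PosDef)
    (ψ : Fin l → MvPolynomial (Fin n) ℝ)
    (hψ : ∀ j, (ψ j).totalDegree ≤ 2 * (k - halfCeil (h j)))
    (hrep : (C a : MvPolynomial (Fin n) ℝ)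
      = quadForm n k G0 + (∑ i, g i * quadForm n (k - halfCeil (g i)) (G i))
        + ∑ j, h j * ψ j) :
    ∀ y : (Fin n →₀ ℕ) → ℝ, y 0 = 1 →
      (∀ j, locMat n (k - halfCeil (h j)) (h j) y = 0) →
      (momentMat n k y * G0).trace
        + (∑ i, (locMat n (k - halfCeil (g i)) (g i) y * G i).trace) = a := by
  intro y hy hloc
  rw [stmt1_general g h k _ _ a G0 G ψ hψ hrep y hloc, hy, mul_one]
end

section
/- Fix polynomials g_1,…,g_m ∈ ℝ[x] such that the set S(g) := {x ∈ ℝⁿ : g_i(x) ≥ 0 for all i} has nonempty interior, and fix an integer k ≥ max_i ⌈g_i⌉. Suppose a > 0 and symmetric positive definite matrices Q_0 (indexed by ℕ^n_k) and Q_i (indexed by ℕ^n_{k-⌈g_i⌉}), i ∈ {1,…,m}, are such that every real sequence y = (y_α)_{α∈ℕ^n_{2k}} with y_0 = 1 satisfies trace(M_k(y)·Q_0) + Σ_{i=1}^m trace(M_{k-⌈g_i⌉}(g_i·y)·Q_i) = a. Then the polynomial v_k^T Q_0 v_k + Σ_{i=1}^m g_i · v_{k-⌈g_i⌉}^T Q_i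 v_{k-⌈g_i⌉} is identically equal to the constant a; consequently, for every c > 0 there exist symmetric positive definite matrices G_0,…,G_m (of the same respective index sets) with c = v_k^T G_0 v_k + Σ_{i=1}^m g_i · v_{k-⌈g_i⌉}^T G_i v_{k-⌈g_i⌉}. -/
open MvPolynomial

/-!
The left-hand side of the trace condition is the value of the Riesz functional `x^α ↦ y_α` at the
polynomial `p = v_k^T Q_0 v_k + Σ_i g_i · v_{k-⌈g_i⌉}^T Q_i v_{k-⌈g_i⌉}`. So every linear functional
normalised by `1 ↦ 1` takes the value `a` at `p`. For the functionals `coeff 0` and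
`coeff 0 + coeff α` with `α ≠ 0`, this says that `p` has constant term `a` and no other terms.
Multiplying all the matrices by `c / a > 0` then represents `c`.
-/

section RieszFunctional

variable {σ R : Type*} [CommSemiring R]

/-- The Riesz functional `L_y` of a sequence `y`: the linear functional on polynomials with
`L_y(x^α) = y_α`. -/
noncomputable def rieszFunctional (y : (σ →₀ ℕ) → R) : MvPolynomial σ R →ₗ[R] R :=
  (basisMonomials σ R).constr R y

/-- The shifted sequence `q·y`, whose moment matrices are the localizing matrices of `q`. -/
noncomputable def shiftSeq (q : MvPolynomial σ R) (y : (σ →₀ ℕ) → R) : (σ →₀ ℕ) → R :=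
  fun α => ∑ γ ∈ q.support, coeff γ q * y (α + γ)

lemma rieszFunctional_monomial (y : (σ →₀ ℕ) → R) (α : σ →₀ ℕ) (r : R) :
    rieszFunctional y (monomial α r) = r * y α := by
  have basis_value : rieszFunctional y (monomial α 1) = y α := by
    simpa only [rieszFunctional, coe_basisMonomials] using (basisMonomials σ R).constr_basis R y α
  rw [← mul_one r, ← smul_eq_mul, ← smul_monomial, map_smul, basis_value, smul_eq_mul,
    smul_eq_mul, mul_one]

lemma rieszFunctional_self (L : MvPolynomial σ R →ₗ[R] R) :
    rieszFunctional (fun α => L (monomial α 1)) = L :=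
  (basisMonomials σ R).constr_self R L

lemma rieszFunctional_mul_monomial (y : (σ →₀ ℕ) → R) (q : MvPolynomial σ R) (α : σ →₀ ℕ) :
    rieszFunctional y (q * monomial α 1) = shiftSeq q y α := by
  conv_lhs => rw [q.as_sum, Finset.sum_mul, map_sum]
  refine Finset.sum_congr rfl fun γ _ => ?_
  rw [monomial_mul, mul_one, rieszFunctional_monomial, add_comm]

lemma rieszFunctional_shiftSeq (q p : MvPolynomial σ R) (y : (σ →₀ ℕ) → R) :
    rieszFunctional (shiftSeq q y) p = rieszFunctional y (q * p) := by
  have functionals_eq : rieszFunctional (shiftSeq q y)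
      = rieszFunctional y ∘ₗ LinearMap.mulLeft R q := by
    rw [← funext (rieszFunctional_mul_monomial y q)]
    exact rieszFunctional_self (rieszFunctional y ∘ₗ LinearMap.mulLeft R q)
  exact LinearMap.congr_fun functionals_eq p

end RieszFunctional

lemma eq_C_of_forall_linearMap {σ R : Type*} [CommRing R] {p : MvPolynomial σ R} {a : R}
    (h : ∀ L : MvPolynomial σ R →ₗ[R] R, L 1 = 1 → L p = a) : p = C a := by
  classical
  have coeff_zero_eq : coeff 0 p = a := h (lcoeff R 0) (by simp)
  ext α
  rcases eq_or_ne α 0 with rfl | hα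
  · rw [coeff_zero_eq, coeff_zero_C]
  · have coeff_add_eq : coeff 0 p + coeff α p = a :=
      h (lcoeff R 0 + lcoeff R α) (by simp [coeff_one, hα.symm])
    rw [coeff_C, if_neg hα.symm]
    rwa [coeff_zero_eq, add_eq_left] at coeff_add_eq

section MomentMatrices

variable {n d : ℕ}

lemma trace_momentMat_mul (y : (Fin n →₀ ℕ) → ℝ) (G : Matrix ↥(degLE n d) ↥(degLE n d) ℝ) :
    (momentMat n d y * G).trace = rieszFunctional y (quadForm n d G) := by
  simp only [Matrix.trace, Matrix.diag, Matrix.mul_apply, momentMat, Matrix.of_apply, quadForm,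
    map_sum, rieszFunctional_monomial]
  rw [Finset.sum_comm]
  refine Finset.sum_congr rfl fun α _ => Finset.sum_congr rfl fun β _ => ?_
  rw [mul_comm, add_comm]

lemma locMat_eq_momentMat (q : MvPolynomial (Fin n) ℝ) (y : (Fin n →₀ ℕ) → ℝ) :
    locMat n d q y = momentMat n d (shiftSeq q y) :=
  rfl

lemma trace_locMat_mul (q : MvPolynomial (Fin n) ℝ) (y : (Fin n →₀ ℕ) → ℝ)
    (G : Matrix ↥(degLE n d) ↥(degLE n d) ℝ) :
    (locMat n d q y * G).trace = rieszFunctional y (q * quadForm n d G) := by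
  rw [locMat_eq_momentMat, trace_momentMat_mul, rieszFunctional_shiftSeq]

lemma quadForm_smul (r : ℝ) (G : Matrix ↥(degLE n d) ↥(degLE n d) ℝ) :
    quadForm n d (r • G) = C r * quadForm n d G := by
  simp only [quadForm, Finset.mul_sum, C_mul_monomial, Matrix.smul_apply, smul_eq_mul]

end MomentMatrices

section WeightedSums

variable {ι : Type*} [Fintype ι] {n k : ℕ} {d : ι → ℕ} (g : ι → MvPolynomial (Fin n) ℝ)
  (Q0 : Matrix ↥(degLE n k) ↥(degLE n k) ℝ)
  (Q : ∀ i, Matrix ↥(degLE n (d i)) ↥(degLE n (d i)) ℝ)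

/-- The polynomial `v_k^T Q_0 v_k + Σ_i g_i · v_{d_i}^T Q_i v_{d_i}`, with the size `d_i` of each
multiplier chosen freely rather than as `k - ⌈g_i⌉`. -/
noncomputable def weightedQuadForm : MvPolynomial (Fin n) ℝ :=
  quadForm n k Q0 + ∑ i, g i * quadForm n (d i) (Q i)

lemma rieszFunctional_weightedQuadForm (y : (Fin n →₀ ℕ) → ℝ) :
    rieszFunctional y (weightedQuadForm g Q0 Q)
      = (momentMat n k y * Q0).trace + ∑ i, (locMat n (d i) (g i) y * Q i).trace := by
  simp only [weightedQuadForm, map_add, map_sum, trace_momentMat_mul, trace_locMat_mul]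

lemma weightedQuadForm_smul (r : ℝ) :
    weightedQuadForm g (r • Q0) (fun i => r • Q i) = C r * weightedQuadForm g Q0 Q := by
  simp only [weightedQuadForm, quadForm_smul, mul_add, Finset.mul_sum, mul_left_comm (C r)]

variable {g Q0 Q} {a : ℝ}

lemma weightedQuadForm_eq_C
    (htr : ∀ y : (Fin n →₀ ℕ) → ℝ, y 0 = 1 →
      (momentMat n k y * Q0).trace + ∑ i, (locMat n (d i) (g i) y * Q i).trace = a) :
    weightedQuadForm g Q0 Q = C a := by
  refine eq_C_of_forall_linearMap fun L hL => ?_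
  rw [← rieszFunctional_self L, rieszFunctional_weightedQuadForm]
  exact htr _ hL

lemma exists_posDef_C_eq_weightedQuadForm (ha : 0 < a) (hQ0 : Q0.PosDef)
    (hQ : ∀ i, (Q i).PosDef) (hrep : weightedQuadForm g Q0 Q = C a) {c : ℝ} (hc : 0 < c) :
    ∃ G0 : Matrix ↥(degLE n k) ↥(degLE n k) ℝ, G0.PosDef ∧
    ∃ G : ∀ i, Matrix ↥(degLE n (d i)) ↥(degLE n (d i)) ℝ,
      (∀ i, (G i).PosDef) ∧ C c = weightedQuadForm g G0 G := by
  have ratio_pos : 0 < c / a := div_pos hc ha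
  refine ⟨(c / a) • Q0, hQ0.smul ratio_pos, fun i => (c / a) • Q i,
    fun i => (hQ i).smul ratio_pos, ?_⟩
  rw [weightedQuadForm_smul, hrep, ← C_mul, div_mul_cancel₀ c ha.ne']

end WeightedSums

theorem stmt2_general {ι : Type*} [Fintype ι] {n k : ℕ} {d : ι → ℕ}
    {g : ι → MvPolynomial (Fin n) ℝ} {a : ℝ} (ha : 0 < a)
    {Q0 : Matrix ↥(degLE n k) ↥(degLE n k) ℝ} (hQ0 : Q0.PosDef)
    {Q : ∀ i, Matrix ↥(degLE n (d i)) ↥(degLE n (d i)) ℝ} (hQ : ∀ i, (Q i).PosDef)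
    (htr : ∀ y : (Fin n →₀ ℕ) → ℝ, y 0 = 1 →
      (momentMat n k y * Q0).trace + ∑ i, (locMat n (d i) (g i) y * Q i).trace = a) :
    quadForm n k Q0 + ∑ i, g i * quadForm n (d i) (Q i) = C a ∧
    ∀ c : ℝ, 0 < c →
      ∃ G0 : Matrix ↥(degLE n k) ↥(degLE n k) ℝ, G0.PosDef ∧
      ∃ G : ∀ i, Matrix ↥(degLE n (d i)) ↥(degLE n (d i)) ℝ,
        (∀ i, (G i).PosDef) ∧
        C c = quadForm n k G0 + ∑ i, g i * quadForm n (d i) (G i) :=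
  ⟨weightedQuadForm_eq_C htr, fun _ hc =>
    exists_posDef_C_eq_weightedQuadForm ha hQ0 hQ (weightedQuadForm_eq_C htr) hc⟩

/-- Suppose `S(g)` has nonempty interior and `a > 0` together with symmetric
positive definite `Q_0, …, Q_m` are such that every `y` with `y_0 = 1` satisfies
`trace(M_k(y)·Q_0) + Σ_i trace(M_{k-⌈g_i⌉}(g_i·y)·Q_i) = a`.  Then
`v_k^T Q_0 v_k + Σ_i g_i · v_{k-⌈g_i⌉}^T Q_i v_{k-⌈g_i⌉} = a` as polynomials, and for every
`c > 0` there are symmetric positive definite `G_0, …, G_m` with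
`c = v_k^T G_0 v_k + Σ_i g_i · v_{k-⌈g_i⌉}^T G_i v_{k-⌈g_i⌉}`. -/
theorem stmt2 (n m : ℕ) (g : Fin m → MvPolynomial (Fin n) ℝ)
    (hint : (interior {x : Fin n → ℝ | ∀ i, 0 ≤ eval x (g i)}).Nonempty)
    (k : ℕ) (hk : ∀ i, halfCeil (g i) ≤ k)
    (a : ℝ) (ha : 0 < a)
    (Q0 : Matrix ↥(degLE n k) ↥(degLE n k) ℝ) (hQ0 : Q0.PosDef)
    (Q : ∀ i : Fin m,
      Matrix ↥(degLE n (k - halfCeil (g i))) ↥(degLE n (k - halfCeil (g i))) ℝ)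
    (hQ : ∀ i, (Q i).PosDef)
    (htr : ∀ y : (Fin n →₀ ℕ) → ℝ, y 0 = 1 →
      (momentMat n k y * Q0).trace
        + (∑ i, (locMat n (k - halfCeil (g i)) (g i) y * Q i).trace) = a) :
    (quadForm n k Q0 + (∑ i, g i * quadForm n (k - halfCeil (g i)) (Q i))
        = (C a : MvPolynomial (Fin n) ℝ)) ∧
    (∀ c : ℝ, 0 < c →
      ∃ G0 : Matrix ↥(degLE n k) ↥(degLE n k) ℝ, G0.PosDef ∧
      ∃ G : ∀ i : Fin m,
          Matrix ↥(degLE n (k - halfCeil (g i))) ↥(degLE n (k - halfCeil (g i))) ℝ,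
        (∀ i, (G i).PosDef) ∧
        (C c : MvPolynomial (Fin n) ℝ)
          = quadForm n k G0 + ∑ i, g i * quadForm n (k - halfCeil (g i)) (G i)) :=
  stmt2_general ha hQ0 hQ htr
end

section
/- Let I_1,…,I_p ⊆ {1,…,n} and let J_1,…,J_p be disjoint finite index sets with polynomials g_i ∈ ℝ[x(I_j)] for i ∈ J_j. Assume that for every j ∈ {1,…,p} there is some i ∈ J_j with g_i = R_j − ‖x(I_j)‖₂² for some R_j > 0. Then for every j ∈ {1,…,p}, every integer k ≥ max_{i∈J_j} ⌈g_i⌉, and every real c > 0, there exist symmetric positive definite matrices G_0 (indexed by ℕ^{I_j}_k) and G_i (indexed by ℕ^{I_j}_{k-⌈g_i⌉}), i ∈ J_j, such that c = (v_k^{I_j})^T G_0 v_k^{I_j} + Σ_{i∈J_j} g_i · (v_{k-⌈g_i⌉}^{I_j})^T G_i v_{k-⌈g_i⌉}^{I_j} holds in ℝ[x]. (That is, ℝ^{>0} ⊆ Q_k°(g_{J_j}) for all k and all j.) -/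
open MvPolynomial

/-- The finite set `ℕ^I_d` of multi-indices `α` with `|α| ≤ d` supported on `I`. -/
noncomputable def degLEI (n : ℕ) (I : Finset (Fin n)) (d : ℕ) : Finset (Fin n →₀ ℕ) :=
  (degLE n d).filter fun α => α.support ⊆ I

/-- The polynomial `(v_d^I)^T G v_d^I = Σ_{α,β ∈ ℕ^I_d} G_{α,β} x^{α+β}`. -/
noncomputable def quadFormI (n : ℕ) (I : Finset (Fin n)) (d : ℕ)
    (G : Matrix ↥(degLEI n I d) ↥(degLEI n I d) ℝ) : MvPolynomial (Fin n) ℝ :=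
  ∑ α : ↥(degLEI n I d), ∑ β : ↥(degLEI n I d), monomial (α.1 + β.1) (G α β)

/-!
Call a polynomial bounded if some constant minus it lies in the truncated quadratic module `Q_k`.
If `x^(2β)` is bounded, then so is `x^(2β) x_v²`, because `x^(2β) (R - ‖x(I)‖²)` and the other
`x^(2β) x_u²` lie in `Q_k`; hence all `x^(2α)` with `|α| ≤ k` are bounded. Expanding
`(x^α - t x^β)²` bounds every monomial of degree at most `2k`, so every polynomial of degree at
most `2k` in `x(I)` is bounded. Applied to the element `N` of `Q_k` all of whose Gram matrices are
identities, this gives `m = N + q` with `m > 0` and `q ∈ Q_k`, and adding a positive semidefinite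
matrix to an identity matrix gives a positive definite one.
-/

section BoundedAbove

variable {𝕜 A : Type*} [Field 𝕜] [LinearOrder 𝕜] [IsStrictOrderedRing 𝕜] [CommRing A]
  [Algebra 𝕜 A] {Q : PointedCone 𝕜 A}

/-- The elements of an algebra that are bounded above by a constant in the preorder
`a ≤ b ↔ b - a ∈ Q` given by a cone `Q`. -/
def boundedAboveCone (Q : PointedCone 𝕜 A) : PointedCone 𝕜 A where
  carrier := {a | ∃ m : 𝕜, algebraMap 𝕜 A m - a ∈ Q}
  add_mem' := by
    rintro a b ⟨m, hm⟩ ⟨m', hm'⟩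
    refine ⟨m + m', ?_⟩
    rw [map_add, add_sub_add_comm]
    exact add_mem hm hm'
  zero_mem' := ⟨0, by simp⟩
  smul_mem' := by
    rintro ⟨t, ht⟩ a ⟨m, hm⟩
    refine ⟨t * m, ?_⟩
    simpa [smul_sub, Algebra.smul_def, mul_sub] using Q.smul_mem ht hm

theorem mem_boundedAboveCone {a : A} :
    a ∈ boundedAboveCone Q ↔ ∃ m : 𝕜, algebraMap 𝕜 A m - a ∈ Q :=
  Iff.rfl

theorem mem_boundedAboveCone_of_sub_mem {a b : A} (hb : b ∈ boundedAboveCone Q)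
    (hab : b - a ∈ Q) : a ∈ boundedAboveCone Q := by
  obtain ⟨m, hm⟩ := mem_boundedAboveCone.1 hb
  exact mem_boundedAboveCone.2 ⟨m, by simpa using add_mem hm hab⟩

theorem smul_mem_boundedAboveCone {a : A} (ha : a ∈ Q) (hb : a ∈ boundedAboveCone Q) (t : 𝕜) :
    t • a ∈ boundedAboveCone Q := by
  obtain ht | ht := le_total 0 t
  · exact (boundedAboveCone Q).smul_mem ht hb
  · exact mem_boundedAboveCone.2 ⟨0, by simpa using Q.smul_mem (neg_nonneg.2 ht) ha⟩

theorem mul_mem_boundedAboveCone {a b : A} (ha : a ^ 2 ∈ boundedAboveCone Q)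
    (hb : b ^ 2 ∈ boundedAboveCone Q) (hab : (a - b) ^ 2 ∈ Q) :
    a * b ∈ boundedAboveCone Q := by
  have two_mul_mem : (2 : 𝕜) • (a * b) ∈ boundedAboveCone Q := by
    refine mem_boundedAboveCone_of_sub_mem (add_mem ha hb) ?_
    convert hab using 1
    rw [ofNat_smul_eq_nsmul, two_nsmul]
    ring
  simpa using (boundedAboveCone Q).smul_mem (r := (2 : 𝕜)⁻¹) (by positivity) two_mul_mem

theorem mul_sq_mem_boundedAboveCone_of_ball {κ : Type*} {I : Finset κ} {x : κ → A} {R : 𝕜}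
    {s : A} (hs : s ∈ Q) (hsb : s ∈ boundedAboveCone Q)
    (hball : (algebraMap 𝕜 A R - ∑ v ∈ I, x v ^ 2) * s ∈ Q)
    (hsq : ∀ v ∈ I, s * x v ^ 2 ∈ Q) {v : κ} (hv : v ∈ I) :
    s * x v ^ 2 ∈ boundedAboveCone Q := by
  classical
  refine mem_boundedAboveCone_of_sub_mem (smul_mem_boundedAboveCone hs hsb R) ?_
  have decomp : R • s - s * x v ^ 2 =
      (algebraMap 𝕜 A R - ∑ u ∈ I, x u ^ 2) * s + ∑ u ∈ I.erase v, s * x u ^ 2 := by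
    rw [← Finset.mul_sum, ← Finset.add_sum_erase I _ hv, Algebra.smul_def]
    ring
  rw [decomp]
  exact add_mem hball (sum_mem fun u hu => hsq u (Finset.mem_of_mem_erase hu))

theorem exists_pos_algebraMap_sub_mem (h1 : (1 : A) ∈ Q) {a : A}
    (ha : a ∈ boundedAboveCone Q) : ∃ m : 𝕜, 0 < m ∧ algebraMap 𝕜 A m - a ∈ Q := by
  obtain ⟨m, hm⟩ := mem_boundedAboveCone.1 ha
  refine ⟨max m 1, by positivity, ?_⟩
  have := add_mem (Q.smul_mem (sub_nonneg.2 (le_max_left m 1)) h1) hm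
  simpa [Algebra.smul_def] using this

end BoundedAbove

section Gram

variable {σ : Type*}

/-- The polynomial `vᵀ G v` with Gram matrix `G` in the vector `v` of monomials with exponents
in `A`, as a linear function of `G`; for `A = degLEI n I d` it is `quadFormI n I d`. -/
noncomputable def gramForm (A : Finset (σ →₀ ℕ)) : Matrix A A ℝ →ₗ[ℝ] MvPolynomial σ ℝ where
  toFun G := ∑ α : A, ∑ β : A, monomial (α.1 + β.1) (G α β)
  map_add' G H := by simp [Finset.sum_add_distrib]
  map_smul' c G := by simp [Finset.smul_sum, smul_monomial]

theorem gramForm_apply {A : Finset (σ →₀ ℕ)} (G : Matrix A A ℝ) :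
    gramForm A G = ∑ α : A, ∑ β : A, monomial (α.1 + β.1) (G α β) :=
  rfl

theorem gramForm_mem_restrictSupport_mul {A : Finset (σ →₀ ℕ)} (G : Matrix A A ℝ) :
    gramForm A G ∈ restrictSupport ℝ (A : Set (σ →₀ ℕ)) * restrictSupport ℝ ↑A := by
  refine sum_mem fun α _ => sum_mem fun β _ => ?_
  rw [← one_mul (G α β), ← monomial_mul]
  exact Submodule.mul_mem_mul (by simp) (by simp)

/-- The polynomials with a positive semidefinite Gram matrix over the monomials with exponents
in `A`, i.e. the sums of squares of polynomials supported in `A`. -/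
noncomputable def gramCone (A : Finset (σ →₀ ℕ)) : PointedCone ℝ (MvPolynomial σ ℝ) where
  carrier := {f | ∃ G : Matrix A A ℝ, G.PosSemidef ∧ gramForm A G = f}
  add_mem' := by
    rintro _ _ ⟨G, hG, rfl⟩ ⟨H, hH, rfl⟩
    exact ⟨G + H, hG.add hH, map_add _ G H⟩
  zero_mem' := ⟨0, .zero, map_zero _⟩
  smul_mem' := by
    rintro ⟨t, ht⟩ _ ⟨G, hG, rfl⟩
    exact ⟨t • G, hG.smul ht, map_smul _ t G⟩

theorem mem_gramCone {A : Finset (σ →₀ ℕ)} {f : MvPolynomial σ ℝ} :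
    f ∈ gramCone A ↔ ∃ G : Matrix A A ℝ, G.PosSemidef ∧ gramForm A G = f :=
  Iff.rfl

theorem sq_mem_gramCone {A : Finset (σ →₀ ℕ)} {p : MvPolynomial σ ℝ}
    (hp : p ∈ restrictSupport ℝ (A : Set (σ →₀ ℕ))) : p ^ 2 ∈ gramCone A := by
  let a : A → ℝ := fun α => coeff α.1 p
  have expand : p = ∑ α : A, monomial α.1 (a α) := by
    rw [Finset.sum_coe_sort A fun α => monomial α (coeff α p)]
    refine p.as_sum.trans (Finset.sum_subset (Finset.coe_subset.1 hp) fun α _ hα => ?_)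
    rw [notMem_support_iff.1 hα, monomial_zero]
  refine mem_gramCone.2
    ⟨Matrix.vecMulVec a a, by simpa using Matrix.posSemidef_vecMulVec_self_star a, ?_⟩
  conv_rhs => rw [expand, sq, Finset.sum_mul_sum]
  simp only [gramForm_apply, Matrix.vecMulVec_apply, monomial_mul]

end Gram

section DegLEI

variable {n : ℕ} {I : Finset (Fin n)}

theorem mem_degLEI {d : ℕ} {α : Fin n →₀ ℕ} :
    α ∈ degLEI n I d ↔ α.degree ≤ d ∧ α.support ⊆ I := by
  simp only [degLEI, degLE, Finset.mem_filter, Finset.mem_Iic, ← Finsupp.degree_eq_sum]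
  have le_const (h : α.degree ≤ d) : α ≤ Finsupp.equivFunOnFinite.symm fun _ => d :=
    fun i => (Finsupp.le_degree i α).trans h
  tauto

theorem gramForm_degLEI {d : ℕ} (G : Matrix (degLEI n I d) (degLEI n I d) ℝ) :
    gramForm (degLEI n I d) G = quadFormI n I d G :=
  rfl

theorem mem_restrictSupport_degLEI {d : ℕ} {p : MvPolynomial (Fin n) ℝ} :
    p ∈ restrictSupport ℝ ↑(degLEI n I d) ↔ p.totalDegree ≤ d ∧ p.vars ⊆ I := by
  simp only [mem_restrictSupport_iff, Set.subset_def, Finset.mem_coe, mem_degLEI,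
    totalDegree, Finset.sup_le_iff, Finset.subset_iff, mem_vars_iff_mem_support,
    Finsupp.degree_apply, Finsupp.sum]
  grind

open scoped Pointwise in
theorem coe_degLEI_add (d e : ℕ) :
    (degLEI n I (d + e) : Set (Fin n →₀ ℕ)) = ↑(degLEI n I d) + ↑(degLEI n I e) := by
  ext γ
  simp only [Set.mem_add, Finset.mem_coe, mem_degLEI]
  constructor
  · rintro ⟨hdeg, hsupp⟩
    obtain ⟨α, hα, hαd⟩ := γ.exists_le_degree_eq (min d γ.degree) (min_le_right _ _)
    obtain ⟨β, rfl⟩ := le_iff_exists_add.1 hα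
    rw [map_add] at hdeg hαd
    exact ⟨α, ⟨by omega, (Finsupp.support_mono le_self_add).trans hsupp⟩,
      β, ⟨by omega, (Finsupp.support_mono le_add_self).trans hsupp⟩, rfl⟩
  · rintro ⟨α, ⟨hα, hαI⟩, β, ⟨hβ, hβI⟩, rfl⟩
    exact ⟨by rw [map_add]; omega, Finsupp.support_add.trans (Finset.union_subset hαI hβI)⟩

theorem mul_mem_restrictSupport_degLEI {d e : ℕ} {p q : MvPolynomial (Fin n) ℝ}
    (hp : p ∈ restrictSupport ℝ ↑(degLEI n I d)) (hq : q ∈ restrictSupport ℝ ↑(degLEI n I e)) :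
    p * q ∈ restrictSupport ℝ ↑(degLEI n I (d + e)) := by
  rw [coe_degLEI_add, restrictSupport_add]
  exact Submodule.mul_mem_mul hp hq

theorem quadFormI_mem_restrictSupport_degLEI (d : ℕ)
    (G : Matrix (degLEI n I d) (degLEI n I d) ℝ) :
    quadFormI n I d G ∈ restrictSupport ℝ ↑(degLEI n I (d + d)) := by
  rw [coe_degLEI_add, restrictSupport_add, ← gramForm_degLEI]
  exact gramForm_mem_restrictSupport_mul G

variable {Q : PointedCone ℝ (MvPolynomial (Fin n) ℝ)} {k : ℕ}

theorem monomial_sq_mem_boundedAboveCone {e : ℕ} (hke : k ≤ e + 1) {R : ℝ}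
    (hsq : ∀ α ∈ degLEI n I k, monomial α 1 ^ 2 ∈ Q)
    (hball : ∀ α ∈ degLEI n I e, (C R - ∑ v ∈ I, X v ^ 2) * monomial α 1 ^ 2 ∈ Q)
    {α : Fin n →₀ ℕ} (hα : α ∈ degLEI n I k) : monomial α 1 ^ 2 ∈ boundedAboveCone Q := by
  induction α using WellFoundedLT.induction with
  | ind α ih =>
  obtain rfl | hα0 := eq_or_ne α 0
  · exact mem_boundedAboveCone.2 ⟨1, by simp⟩
  obtain ⟨v, hv⟩ := Finsupp.support_nonempty_iff.2 hα0
  obtain ⟨β, rfl⟩ : ∃ β, α = β + Finsupp.single v 1 :=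
    ⟨α - Finsupp.single v 1,
      (Finsupp.sub_add_single_one_cancel (Finsupp.mem_support_iff.1 hv)).symm⟩
  rw [mem_degLEI, map_add, Finsupp.degree_single] at hα
  have hβI : β.support ⊆ I := (Finsupp.support_mono le_self_add).trans hα.2
  have hβk : β ∈ degLEI n I k := mem_degLEI.2 ⟨by omega, hβI⟩
  have hβe : β ∈ degLEI n I e := mem_degLEI.2 ⟨by omega, hβI⟩
  have hβ_lt : β < β + Finsupp.single v 1 :=
    lt_add_of_pos_right β (pos_iff_ne_zero.2 (by simp))
  have mul_X_sq (u : Fin n) : (monomial (β + Finsupp.single u 1) 1 : MvPolynomial (Fin n) ℝ) ^ 2 =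
      monomial β 1 ^ 2 * X u ^ 2 := by
    rw [monomial_add_single, pow_one, mul_pow]
  have hstep : ∀ u ∈ I, β + Finsupp.single u 1 ∈ degLEI n I k := fun u hu =>
    mem_degLEI.2 ⟨by rw [map_add, Finsupp.degree_single]; omega,
      Finsupp.support_add.trans (Finset.union_subset hβI
        (Finsupp.support_single_subset.trans (Finset.singleton_subset_iff.2 hu)))⟩
  rw [mul_X_sq]
  refine mul_sq_mem_boundedAboveCone_of_ball (hsq β hβk) (ih β hβ_lt hβk) (hball β hβe)
    (fun u hu => ?_) (hα.2 hv)
  rw [← mul_X_sq]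
  exact hsq _ (hstep u hu)

theorem mem_boundedAboveCone_of_mem_restrictSupport
    (hsq : ∀ p ∈ restrictSupport ℝ ↑(degLEI n I k), p ^ 2 ∈ Q)
    (hmon : ∀ α ∈ degLEI n I k, monomial α 1 ^ 2 ∈ boundedAboveCone Q)
    {p : MvPolynomial (Fin n) ℝ} (hp : p ∈ restrictSupport ℝ ↑(degLEI n I (k + k))) :
    p ∈ boundedAboveCone Q := by
  rw [p.as_sum]
  refine sum_mem fun γ hγ => ?_
  obtain ⟨α, hα, β, hβ, rfl⟩ := (coe_degLEI_add k k).subset (hp hγ)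
  set t := coeff (α + β) p
  rw [← one_mul t, ← monomial_mul]
  refine mul_mem_boundedAboveCone (hmon α hα) ?_
    (hsq _ (sub_mem (by simp [Finset.mem_coe.1 hα]) (by simp [Finset.mem_coe.1 hβ])))
  have monomial_sq : (monomial β t : MvPolynomial (Fin n) ℝ) ^ 2 = t ^ 2 • monomial β 1 ^ 2 := by
    rw [← smul_pow, smul_monomial, smul_eq_mul, mul_one]
  rw [monomial_sq]
  exact (boundedAboveCone Q).smul_mem (sq_nonneg t) (hmon β hβ)

end DegLEI

section QuadModule

variable {n : ℕ} {ι : Type*} {I : Finset (Fin n)} {J : Finset ι}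
  {g : ι → MvPolynomial (Fin n) ℝ} {k : ℕ}

/-- The truncated quadratic module `Q_k(g_J)` in the variables `x(I)`: the polynomials
`s₀ + ∑ i ∈ J, g i * s i` with `s₀` and `s i` sums of squares of polynomials in `x(I)` of degrees
at most `k` and `k - ⌈g i⌉`. -/
noncomputable def quadModule (I : Finset (Fin n)) (J : Finset ι)
    (g : ι → MvPolynomial (Fin n) ℝ) (k : ℕ) : PointedCone ℝ (MvPolynomial (Fin n) ℝ) :=
  gramCone (degLEI n I k) ⊔
    ⨆ i ∈ J, (gramCone (degLEI n I (k - halfCeil (g i)))).map (LinearMap.mulLeft ℝ (g i))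

theorem sq_mem_quadModule {p : MvPolynomial (Fin n) ℝ}
    (hp : p ∈ restrictSupport ℝ ↑(degLEI n I k)) : p ^ 2 ∈ quadModule I J g k :=
  Submodule.mem_sup_left (sq_mem_gramCone hp)

theorem mul_sq_mem_quadModule {i : ι} (hi : i ∈ J) {p : MvPolynomial (Fin n) ℝ}
    (hp : p ∈ restrictSupport ℝ ↑(degLEI n I (k - halfCeil (g i)))) :
    g i * p ^ 2 ∈ quadModule I J g k :=
  Submodule.mem_sup_right <| Submodule.mem_iSup_of_mem i <| Submodule.mem_iSup_of_mem hi <|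
    PointedCone.mem_map.2 ⟨p ^ 2, sq_mem_gramCone hp, rfl⟩

theorem exists_posSemidef_of_mem_quadModule {f : MvPolynomial (Fin n) ℝ}
    (hf : f ∈ quadModule I J g k) :
    ∃ G0 : Matrix (degLEI n I k) (degLEI n I k) ℝ, G0.PosSemidef ∧
    ∃ G : ∀ i, Matrix (degLEI n I (k - halfCeil (g i))) (degLEI n I (k - halfCeil (g i))) ℝ,
      (∀ i, (G i).PosSemidef) ∧
      f = quadFormI n I k G0 + ∑ i ∈ J, g i * quadFormI n I (k - halfCeil (g i)) (G i) := by
  obtain ⟨s, hs, q, hq, rfl⟩ := Submodule.mem_sup.1 hf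
  obtain ⟨G0, hG0, rfl⟩ := mem_gramCone.1 hs
  obtain ⟨μ, rfl⟩ := (Submodule.mem_iSup_finset_iff_exists_sum _ _).1 hq
  have hμ (i : ι) : ∃ G : Matrix _ _ ℝ, G.PosSemidef ∧
      g i * gramForm (degLEI n I (k - halfCeil (g i))) G = μ i := by
    obtain ⟨s, hs, hsμ⟩ := PointedCone.mem_map.1 (μ i).2
    obtain ⟨G, hG, rfl⟩ := mem_gramCone.1 hs
    exact ⟨G, hG, hsμ⟩
  choose G hG hGμ using hμ
  exact ⟨G0, hG0, G, hG, by simp only [← gramForm_degLEI, hGμ]⟩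

/-- The polynomials `s₀ + ∑ i ∈ J, g i * s i` as in `quadModule I J g k` whose Gram matrices can
all be chosen positive definite, written `Q_k°(g_J)` in the paper. -/
def quadModuleInterior (I : Finset (Fin n)) (J : Finset ι)
    (g : ι → MvPolynomial (Fin n) ℝ) (k : ℕ) : Set (MvPolynomial (Fin n) ℝ) :=
  {f | ∃ G0 : Matrix (degLEI n I k) (degLEI n I k) ℝ, G0.PosDef ∧
    ∃ G : ∀ i, Matrix (degLEI n I (k - halfCeil (g i))) (degLEI n I (k - halfCeil (g i))) ℝ,
      (∀ i ∈ J, (G i).PosDef) ∧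
      f = quadFormI n I k G0 + ∑ i ∈ J, g i * quadFormI n I (k - halfCeil (g i)) (G i)}

theorem mem_quadModuleInterior_of_sub_mem {f : MvPolynomial (Fin n) ℝ}
    (hf : f - (quadFormI n I k 1 + ∑ i ∈ J, g i * quadFormI n I (k - halfCeil (g i)) 1) ∈
      quadModule I J g k) :
    f ∈ quadModuleInterior I J g k := by
  obtain ⟨H0, hH0, H, hH, hsum⟩ := exists_posSemidef_of_mem_quadModule hf
  refine ⟨1 + H0, Matrix.PosDef.one.add_posSemidef hH0,
    fun i => 1 + H i, fun i _ => Matrix.PosDef.one.add_posSemidef (hH i), ?_⟩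
  rw [eq_add_of_sub_eq hsum]
  simp only [← gramForm_degLEI, map_add, mul_add, Finset.sum_add_distrib]
  ring

theorem smul_mem_quadModuleInterior {r : ℝ} (hr : 0 < r) {f : MvPolynomial (Fin n) ℝ}
    (hf : f ∈ quadModuleInterior I J g k) : r • f ∈ quadModuleInterior I J g k := by
  obtain ⟨G0, hG0, G, hG, rfl⟩ := hf
  refine ⟨r • G0, hG0.smul hr, fun i => r • G i, fun i hi => (hG i hi).smul hr, ?_⟩
  simp only [← gramForm_degLEI, map_smul, smul_add, Finset.smul_sum, mul_smul_comm]

theorem halfCeil_ball_le_one (I : Finset (Fin n)) (R : ℝ) :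
    halfCeil (C R - ∑ v ∈ I, X v ^ 2) ≤ 1 := by
  have : (C R - ∑ v ∈ I, X v ^ 2 : MvPolynomial (Fin n) ℝ).totalDegree ≤ 2 :=
    (totalDegree_sub _ _).trans <| max_le (by simp) <|
      totalDegree_finsetSum_le fun v _ => (totalDegree_X_pow v 2).le
  unfold halfCeil
  omega

theorem mul_quadFormI_mem_restrictSupport_degLEI {f : MvPolynomial (Fin n) ℝ} (hf : f.vars ⊆ I)
    (hk : halfCeil f ≤ k)
    (G : Matrix (degLEI n I (k - halfCeil f)) (degLEI n I (k - halfCeil f)) ℝ) :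
    f * quadFormI n I (k - halfCeil f) G ∈ restrictSupport ℝ ↑(degLEI n I (k + k)) := by
  have hdeg : f.totalDegree ≤ 2 * halfCeil f := by unfold halfCeil; omega
  rw [show k + k = 2 * halfCeil f + ((k - halfCeil f) + (k - halfCeil f)) by omega]
  exact mul_mem_restrictSupport_degLEI (mem_restrictSupport_degLEI.2 ⟨hdeg, hf⟩)
    (quadFormI_mem_restrictSupport_degLEI _ G)

theorem mem_boundedAboveCone_quadModule {b : ι} (hb : b ∈ J) {R : ℝ}
    (hgb : g b = C R - ∑ v ∈ I, X v ^ 2) {p : MvPolynomial (Fin n) ℝ}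
    (hp : p ∈ restrictSupport ℝ ↑(degLEI n I (k + k))) :
    p ∈ boundedAboveCone (quadModule I J g k) := by
  have hgb1 : halfCeil (g b) ≤ 1 := hgb ▸ halfCeil_ball_le_one I R
  have hball : ∀ α ∈ degLEI n I (k - halfCeil (g b)),
      (C R - ∑ v ∈ I, X v ^ 2) * monomial α 1 ^ 2 ∈ quadModule I J g k := fun α hα =>
    hgb ▸ mul_sq_mem_quadModule hb (by simp [hα])
  have hsq : ∀ α ∈ degLEI n I k, monomial α 1 ^ 2 ∈ quadModule I J g k := fun α hα =>
    sq_mem_quadModule (by simp [hα])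
  exact mem_boundedAboveCone_of_mem_restrictSupport (fun _ => sq_mem_quadModule)
    (fun _ => monomial_sq_mem_boundedAboveCone (by omega) hsq hball) hp

end QuadModule

theorem stmt10_general {n : ℕ} {ι : Type*} {I : Finset (Fin n)} {J : Finset ι}
    {g : ι → MvPolynomial (Fin n) ℝ} (hvars : ∀ i ∈ J, (g i).vars ⊆ I)
    {b : ι} (hb : b ∈ J) {R : ℝ} (hgb : g b = C R - ∑ v ∈ I, X v ^ 2)
    {k : ℕ} (hk : ∀ i ∈ J, halfCeil (g i) ≤ k) {c : ℝ} (hc : 0 < c) :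
    C c ∈ quadModuleInterior I J g k := by
  have identity_bounded :
      quadFormI n I k 1 + ∑ i ∈ J, g i * quadFormI n I (k - halfCeil (g i)) 1 ∈
        boundedAboveCone (quadModule I J g k) :=
    mem_boundedAboveCone_quadModule hb hgb <|
      add_mem (quadFormI_mem_restrictSupport_degLEI k 1) <|
        sum_mem fun i hi => mul_quadFormI_mem_restrictSupport_degLEI (hvars i hi) (hk i hi) 1
  have one_mem : 1 ∈ quadModule I J g k := by
    simpa using sq_mem_quadModule (J := J) (g := g) (p := 1)
      (mem_restrictSupport_degLEI.2 (by simp))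
  obtain ⟨m, hm, hmem⟩ := exists_pos_algebraMap_sub_mem one_mem identity_bounded
  have scale : (C c : MvPolynomial (Fin n) ℝ) = (c / m) • C m := by
    rw [smul_eq_C_mul, ← C_mul, div_mul_cancel₀ c hm.ne']
  rw [scale]
  exact smul_mem_quadModuleInterior (by positivity) (mem_quadModuleInterior_of_sub_mem hmem)

/-- Correlative sparsity with a ball constraint on each clique of variables:
if for every clique `j` some constraint `g_i` (`i ∈ J_j`) equals `R_j − ‖x(I_j)‖₂²` with
`R_j > 0`, then for every `j`, every `k ≥ max_{i ∈ J_j} ⌈g_i⌉` and every `c > 0` there exist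
symmetric positive definite matrices `G_0` (indexed by `ℕ^{I_j}_k`) and `G_i` (indexed by
`ℕ^{I_j}_{k-⌈g_i⌉}`, `i ∈ J_j`) with
`c = (v_k^{I_j})^T G_0 v_k^{I_j} + Σ_{i∈J_j} g_i (v_{k-⌈g_i⌉}^{I_j})^T G_i v_{k-⌈g_i⌉}^{I_j}`;
i.e. `ℝ^{>0} ⊆ Q_k°(g_{J_j})`. -/
theorem stmt10 (n p : ℕ) {ι : Type} [DecidableEq ι]
    (I : Fin p → Finset (Fin n)) (J : Fin p → Finset ι)
    (hdisj : ∀ j j' : Fin p, j ≠ j' → Disjoint (J j) (J j'))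
    (g : ι → MvPolynomial (Fin n) ℝ)
    (hvars : ∀ j : Fin p, ∀ i ∈ J j, (g i).vars ⊆ I j)
    (hball : ∀ j : Fin p, ∃ i ∈ J j, ∃ Rj : ℝ, 0 < Rj ∧
      g i = C Rj - ∑ v ∈ I j, X v ^ 2) :
    ∀ j : Fin p, ∀ k : ℕ, (∀ i ∈ J j, halfCeil (g i) ≤ k) → ∀ c : ℝ, 0 < c →
      ∃ G0 : Matrix ↥(degLEI n (I j) k) ↥(degLEI n (I j) k) ℝ, G0.PosDef ∧
      ∃ G : ∀ i : ι,
          Matrix ↥(degLEI n (I j) (k - halfCeil (g i)))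
            ↥(degLEI n (I j) (k - halfCeil (g i))) ℝ,
        (∀ i ∈ J j, (G i).PosDef) ∧
        (C c : MvPolynomial (Fin n) ℝ)
          = quadFormI n (I j) k G0
            + ∑ i ∈ J j, g i * quadFormI n (I j) (k - halfCeil (g i)) (G i) := by
  intro j k hk c hc
  obtain ⟨b, hb, R, -, hgb⟩ := hball j
  exact stmt10_general (hvars j) hb hgb hk hc
end

section
/- Let p, ζ be positive integers, let C_j and A_{1,j},…,A_{ζ,j} be real symmetric matrices of size s_j for each j ∈ {1,…,p}, let a_1,…,a_p > 0, b ∈ ℝ^ζ, and define ψ(y) := b·y + Σ_{j=1}^p a_j·λ_min(C_j − Σ_{i=1}^ζ y_i A_{i,j}) and τ := inf{ Σ_{j=1}^p ⟨C_j,X_j⟩ : X_j symmetric positive semidefinite, ⟨A_{i,j},X_j⟩ summed over j equals b_i for all i }. Fix z̄ ∈ ℝ^ζ, and for each j let u_{1,j},…,u_{r_j,j} be unit eigenvectors of C_j − Σ_i z̄_i A_{i,j} with eigenvalue λ_min(C_j − Σ_i z̄_i A_{i,j}), and let ξ_{i,j} ≥ 0 satisfy Σ_{i=1}^{r_j} ξ_{i,j}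 = 1. Set X*_j := a_j Σ_{i=1}^{r_j} ξ_{i,j} u_{i,j} u_{i,j}^T and suppose Σ_{j=1}^p ⟨A_{i,j},X*_j⟩ = b_i for all i. Then each X*_j is positive semidefinite and Σ_{j=1}^p ⟨C_j, X*_j⟩ = ψ(z̄); in particular, if ψ(z̄) = τ then (X*_1,…,X*_p) attains the infimum τ. -/
/-- The smallest eigenvalue of a real symmetric matrix, expressed as the infimum of the
Rayleigh quotient over the unit sphere. -/
noncomputable def lamMin {d : ℕ} (U : Matrix (Fin d) (Fin d) ℝ) : ℝ :=
  sInf {r : ℝ | ∃ v : Fin d → ℝ, (∑ i, v i ^ 2) = 1 ∧ r = ∑ i, ∑ j, v i * U i j * v j}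

/-- The set of values of the primal SDP with `p` groups of symmetric psd matrix variables. -/
def primalVals (p ζ : ℕ) (sdim : Fin p → ℕ)
    (Cm : ∀ j : Fin p, Matrix (Fin (sdim j)) (Fin (sdim j)) ℝ)
    (A : ∀ (_ : Fin ζ) (j : Fin p), Matrix (Fin (sdim j)) (Fin (sdim j)) ℝ)
    (b : Fin ζ → ℝ) : Set ℝ :=
  {t : ℝ | ∃ X : ∀ j : Fin p, Matrix (Fin (sdim j)) (Fin (sdim j)) ℝ,
    (∀ j, (X j).IsSymm) ∧ (∀ j, (X j).PosSemidef) ∧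
    (∀ i, (∑ j, (A i j * X j).trace) = b i) ∧ t = ∑ j, (Cm j * X j).trace}

/-!
Each `X*_j` is supported on an eigenspace, so pairing the slack matrix `C_j - ∑ i, z̄_i A_{i,j}`
with it gives the eigenvalue times `trace X*_j = a_j`. Feasibility of `X*` turns the Lagrangian
term `∑ i, z̄_i ∑ j, ⟨A_{i,j}, X*_j⟩` into `b · z̄`, so the objective value is `ψ(z̄)`.
-/

section SpectralCombination

open Matrix

variable {R n ι κ : Type*} [Fintype ι] [Fintype κ]

theorem posSemidef_smul_sum_smul_vecMulVec_star [Finite n] [CommRing R] [PartialOrder R]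
    [StarRing R] [StarOrderedRing R] {a : R} (ha : 0 ≤ a) {ξ : ι → R} (hξ : ∀ i, 0 ≤ ξ i)
    (u : ι → n → R) :
    (a • ∑ i, ξ i • vecMulVec (u i) (star (u i))).PosSemidef :=
  (posSemidef_sum _ fun i _ => (posSemidef_vecMulVec_self_star (u i)).smul (hξ i)).smul ha

theorem trace_mul_vecMulVec_of_mulVec_eq_smul [Fintype n] [CommSemiring R] {M : Matrix n n R}
    {μ : R} {u : n → R} (h : M *ᵥ u = μ • u) (v : n → R) :
    (M * vecMulVec u v).trace = μ * (u ⬝ᵥ v) := by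
  rw [mul_vecMulVec, h, smul_vecMulVec, trace_smul, trace_vecMulVec, smul_eq_mul]

theorem trace_mul_smul_sum_smul_vecMulVec [Fintype n] [CommSemiring R] {M : Matrix n n R}
    {μ : R} {u v : ι → n → R} (hM : ∀ i, M *ᵥ u i = μ • u i) (huv : ∀ i, u i ⬝ᵥ v i = 1)
    {ξ : ι → R} (hξ : ∑ i, ξ i = 1) (a : R) :
    (M * (a • ∑ i, ξ i • vecMulVec (u i) (v i))).trace = a * μ := by
  have hterm (i : ι) : (M * vecMulVec (u i) (v i)).trace = μ := by
    rw [trace_mul_vecMulVec_of_mulVec_eq_smul (hM i), huv i, mul_one]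
  simp only [Matrix.mul_smul, trace_smul, Matrix.mul_sum, trace_sum, hterm, smul_eq_mul,
    ← Finset.sum_mul, hξ, one_mul]

theorem sum_trace_mul_eq_add_sum_trace_sub_mul [CommRing R] {m : κ → Type*}
    [∀ j, Fintype (m j)] (C : ∀ j, Matrix (m j) (m j) R) (A : ∀ (_ : ι) j, Matrix (m j) (m j) R)
    (X : ∀ j, Matrix (m j) (m j) R) (z : ι → R) :
    ∑ j, (C j * X j).trace =
      ∑ i, (∑ j, (A i j * X j).trace) * z i +
        ∑ j, ((C j - ∑ i, z i • A i j) * X j).trace := by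
  have hslack (j : κ) : ((C j - ∑ i, z i • A i j) * X j).trace =
      (C j * X j).trace - ∑ i, (A i j * X j).trace * z i := by
    simp only [Matrix.sub_mul, Matrix.sum_mul, Matrix.smul_mul, trace_sub, trace_sum,
      trace_smul, smul_eq_mul, mul_comm (z _)]
  simp only [hslack, Finset.sum_sub_distrib, Finset.sum_mul]
  rw [Finset.sum_comm, add_sub_cancel]

theorem stmt17_general [CommRing R] [PartialOrder R] [StarRing R] [StarOrderedRing R]
    {m ρ : κ → Type*} [∀ j, Fintype (m j)] [∀ j, Fintype (ρ j)]
    (C : ∀ j, Matrix (m j) (m j) R) (A : ∀ (_ : ι) j, Matrix (m j) (m j) R)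
    {a : κ → R} (ha : ∀ j, 0 ≤ a j) {b z : ι → R} {μ : κ → R} {u : ∀ j, ρ j → m j → R}
    (hunit : ∀ j i, u j i ⬝ᵥ star (u j i) = 1)
    (heig : ∀ j i, (C j - ∑ i', z i' • A i' j) *ᵥ u j i = μ j • u j i)
    {ξ : ∀ j, ρ j → R} (hξ0 : ∀ j i, 0 ≤ ξ j i) (hξ1 : ∀ j, ∑ i, ξ j i = 1)
    {X : ∀ j, Matrix (m j) (m j) R}
    (hX : ∀ j, X j = a j • ∑ i, ξ j i • vecMulVec (u j i) (star (u j i)))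
    (hfeas : ∀ i, ∑ j, (A i j * X j).trace = b i) :
    (∀ j, (X j).PosSemidef) ∧
      ∑ j, (C j * X j).trace = ∑ i, b i * z i + ∑ j, a j * μ j := by
  have hslack (j : κ) : ((C j - ∑ i, z i • A i j) * X j).trace = a j * μ j := by
    rw [hX j, trace_mul_smul_sum_smul_vecMulVec (heig j) (hunit j) (hξ1 j)]
  refine ⟨fun j => ?_, ?_⟩
  · rw [hX j]
    exact posSemidef_smul_sum_smul_vecMulVec_star (ha j) (hξ0 j) (u j)
  · simp only [sum_trace_mul_eq_add_sum_trace_sub_mul C A X z, hfeas, hslack]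

end SpectralCombination

theorem sum_trace_mul_mem_primalVals {p ζ : ℕ} {sdim : Fin p → ℕ}
    (C : ∀ j, Matrix (Fin (sdim j)) (Fin (sdim j)) ℝ)
    {A : ∀ (_ : Fin ζ) (j : Fin p), Matrix (Fin (sdim j)) (Fin (sdim j)) ℝ} {b : Fin ζ → ℝ}
    {X : ∀ j, Matrix (Fin (sdim j)) (Fin (sdim j)) ℝ} (hX : ∀ j, (X j).PosSemidef)
    (hfeas : ∀ i, ∑ j, (A i j * X j).trace = b i) :
    ∑ j, (C j * X j).trace ∈ primalVals p ζ sdim C A b :=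
  ⟨X, fun j => Matrix.isHermitian_iff_isSymm.mp (hX j).isHermitian, hX, hfeas, rfl⟩

/-- Extracting an optimal primal solution from unit eigenvectors associated
to the smallest eigenvalues: if `X*_j = a_j Σ_i ξ_{i,j} u_{i,j} u_{i,j}^T` is built from unit
`λ_min`-eigenvectors of `C_j − Σ_i z̄_i A_{i,j}` with convex weights `ξ_{i,j}` and satisfies
the affine constraints, then each `X*_j` is psd, `Σ_j ⟨C_j, X*_j⟩ = ψ(z̄)`, and if
`ψ(z̄) = τ` then the primal infimum `τ` is attained. -/
theorem stmt17 (p ζ : ℕ) (hp : 0 < p) (hζ : 0 < ζ)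
    (sdim : Fin p → ℕ) (hsdim : ∀ j, 0 < sdim j)
    (Cm : ∀ j : Fin p, Matrix (Fin (sdim j)) (Fin (sdim j)) ℝ)
    (A : ∀ (_ : Fin ζ) (j : Fin p), Matrix (Fin (sdim j)) (Fin (sdim j)) ℝ)
    (hCm : ∀ j, (Cm j).IsSymm) (hA : ∀ i j, (A i j).IsSymm)
    (a : Fin p → ℝ) (ha : ∀ j, 0 < a j) (b : Fin ζ → ℝ)
    (zbar : Fin ζ → ℝ)
    (r : Fin p → ℕ)
    (u : ∀ j : Fin p, Fin (r j) → Fin (sdim j) → ℝ)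
    (hunit : ∀ j i, (∑ v, u j i v ^ 2) = 1)
    (heig : ∀ j i, (Cm j - ∑ i', zbar i' • A i' j).mulVec (u j i)
      = lamMin (Cm j - ∑ i', zbar i' • A i' j) • u j i)
    (ξ : ∀ j : Fin p, Fin (r j) → ℝ)
    (hξ0 : ∀ j i, 0 ≤ ξ j i) (hξ1 : ∀ j, (∑ i, ξ j i) = 1)
    (Xstar : ∀ j : Fin p, Matrix (Fin (sdim j)) (Fin (sdim j)) ℝ)
    (hXstar : ∀ j, Xstar j = a j • ∑ i, ξ j i • Matrix.vecMulVec (u j i) (u j i))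
    (hfeas : ∀ i, (∑ j, (A i j * Xstar j).trace) = b i) :
    (∀ j, (Xstar j).PosSemidef) ∧
    ((∑ j, (Cm j * Xstar j).trace)
      = (∑ i, b i * zbar i) + ∑ j, a j * lamMin (Cm j - ∑ i, zbar i • A i j)) ∧
    (((∑ i, b i * zbar i) + (∑ j, a j * lamMin (Cm j - ∑ i, zbar i • A i j))
        = sInf (primalVals p ζ sdim Cm A b) →
      sInf (primalVals p ζ sdim Cm A b) ∈ primalVals p ζ sdim Cm A b)) := by
  obtain ⟨hpsd, hval⟩ := stmt17_general Cm A (fun j => (ha j).le)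
    (fun j i => by simpa [dotProduct, sq] using hunit j i) heig hξ0 hξ1 hXstar hfeas
  exact ⟨hpsd, hval, fun h => h ▸ hval ▸ sum_trace_mul_mem_primalVals Cm hpsd hfeas⟩
end
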